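/- arXiv:1808.03764 — 3 statements merged into one kernel-verified Lean document; each statement's English description precedes it below -/
import Mathlib

section
/- For every n ≥ 0, Σ_{σ ∈ S_n(321)} q^{exc(σ)} p^{crs(σ)} = C_n(q,p) as polynomials in q and p, where C_n(q,p) are the q,p-Catalan polynomials of Randrianarivony. -/
open Equiv Finset

/-- Number of crossings of a permutation of `Fin n` (0-indexed version of the
classical definition on `[n] = {1,…,n}`): pairs `(i,j)` with
`i<j<σ(i)<σ(j)` or `σ(i)<σ(j)≤i<j`. -/
def crs {n : ℕ} (σ : Equiv.Perm (Fin n)) : ℕ :=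
  (Finset.univ.filter (fun q : Fin n × Fin n =>
    ((q.1 : ℕ) < q.2 ∧ (q.2 : ℕ) < σ q.1 ∧ (σ q.1 : ℕ) < σ q.2) ∨
    ((σ q.1 : ℕ) < σ q.2 ∧ (σ q.2 : ℕ) ≤ q.1 ∧ (q.1 : ℕ) < q.2))).card

/-- Number of nestings of a permutation of `Fin n`: pairs `(i,j)` with
`i<j<σ(j)<σ(i)` or `σ(j)<σ(i)≤i<j`. -/
def nes {n : ℕ} (σ : Equiv.Perm (Fin n)) : ℕ :=
  (Finset.univ.filter (fun q : Fin n × Fin n =>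
    ((q.1 : ℕ) < q.2 ∧ (q.2 : ℕ) < σ q.2 ∧ (σ q.2 : ℕ) < σ q.1) ∨
    ((σ q.2 : ℕ) < σ q.1 ∧ (σ q.1 : ℕ) ≤ q.1 ∧ (q.1 : ℕ) < q.2))).card

/-- Number of fixed points. -/
def fp {n : ℕ} (σ : Equiv.Perm (Fin n)) : ℕ :=
  (Finset.univ.filter (fun i : Fin n => σ i = i)).card

/-- Number of excedances. -/
def exc {n : ℕ} (σ : Equiv.Perm (Fin n)) : ℕ :=
  (Finset.univ.filter (fun i : Fin n => (i : ℕ) < σ i)).card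

/-- Number of inversions. -/
def invStat {n : ℕ} (σ : Equiv.Perm (Fin n)) : ℕ :=
  (Finset.univ.filter (fun q : Fin n × Fin n => q.1 < q.2 ∧ σ q.2 < σ q.1)).card

/-- `σ` contains the pattern `τ`: there is a strictly increasing choice of positions
on which `σ` is order-isomorphic to `τ`. -/
def Contains {n k : ℕ} (σ : Equiv.Perm (Fin n)) (τ : Equiv.Perm (Fin k)) : Prop :=
  ∃ f : Fin k → Fin n, StrictMono f ∧ ∀ a b : Fin k, σ (f a) < σ (f b) ↔ τ a < τ b

/-- `σ` avoids the pattern `τ`. -/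
def Avoids {n k : ℕ} (σ : Equiv.Perm (Fin n)) (τ : Equiv.Perm (Fin k)) : Prop :=
  ¬ Contains σ τ

/-- The pattern 123 (as a permutation of `Fin 3`, 0-indexed). -/
def p123 : Equiv.Perm (Fin 3) := 1
/-- The pattern 132. -/
def p132 : Equiv.Perm (Fin 3) := Equiv.swap 1 2
/-- The pattern 213. -/
def p213 : Equiv.Perm (Fin 3) := Equiv.swap 0 1
/-- The pattern 321. -/
def p321 : Equiv.Perm (Fin 3) := Equiv.swap 0 2
/-- The pattern 231. -/
def p231 : Equiv.Perm (Fin 3) := Equiv.swap 0 2 * Equiv.swap 0 1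
/-- The pattern 312. -/
def p312 : Equiv.Perm (Fin 3) := Equiv.swap 0 2 * Equiv.swap 1 2

open MvPolynomial in
/-- The q,p-Catalan polynomials of Randrianarivony, as polynomials in two variables
`q = X true` and `p = X false`:
`C 0 = C 1 = 1` and `C (n+2) = C (n+1) + q * Σ_{k=0}^{n} p^k C k C (n+1-k)`. -/
noncomputable def qpCatalan : ℕ → MvPolynomial Bool ℤ
  | 0 => 1
  | 1 => 1
  | n + 2 => qpCatalan (n + 1) + (X true : MvPolynomial Bool ℤ) *
      ∑ k ∈ (Finset.range (n + 1)).attach,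
        (X false : MvPolynomial Bool ℤ) ^ (k : ℕ) * qpCatalan k * qpCatalan (n + 1 - k)
  termination_by n => n
  decreasing_by
  · omega
  · have := Finset.mem_range.mp k.2; omega
  · omega

/-!
Deleting the first value turns the 321-avoiding permutations into the nodes of a generating tree.
Label `σ` by the largest `a` such that its values smaller than `a` appear in increasing order; then
`v` can be prepended exactly when `v ≤ a`. Prepending `0` changes neither statistic and moves the
label to `a + 1`; prepending `v + 1` multiplies the weight by `q * p ^ v` and moves the label to
`v + 1`. Cutting a walk in the tree at its first return to the label `1` shows that the generating
function `D_q(x)` of the weights satisfies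
`D_q(x) = 1 + x * D_{qp}(x) * (1 + q * (D_q(x) - 1))`, whereas the recurrence of the `q,p`-Catalan
polynomials amounts to `D_q(x) = 1 + x * (D_q(x) + q * D_q(p x) * (D_q(x) - 1))`.
By the first equation the defect `E_q` of the second one equals a unit times `x * E_{qp}`.
Iterating, `E_q` is divisible by every power of `x`, so it vanishes.
-/

section GeneratingTree

open PowerSeries

variable {R : Type*} [CommSemiring R]

/-- Weighted sum of `f` over the children of a node labelled `a` in the Catalan generating tree:
`a + 1`, with weight `1`, and `v + 1` for each `v < a`, with weight `w v`. -/
def childSum (w f : ℕ → R) (a : ℕ) : R :=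
  f (a + 1) + ∑ v ∈ range a, w v * f (v + 1)

/-- Generating function, by number of generations, of the descendants of a node labelled `a`, each
weighted by the product of the weights `w` along its branch: iterating `childSum w` carries out the
sum. -/
def treeSeries (w : ℕ → R) (a : ℕ) : R⟦X⟧ :=
  PowerSeries.mk fun n => (childSum w)^[n] 1 a

lemma treeSeries_eq_one_add (w : ℕ → R) (a : ℕ) :
    treeSeries w a = 1 + X * childSum (C ∘ w) (treeSeries w) a := by
  ext n
  cases n with
  | zero => simp [treeSeries]
  | succ n =>
    simp [treeSeries, childSum, Function.iterate_succ_apply', coeff_succ_X_mul, coeff_one]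

lemma eq_of_eq_add_X_mul_childSum {w : ℕ → R} {c : R⟦X⟧} {F G : ℕ → R⟦X⟧}
    (hF : ∀ a, F a = c + X * childSum (C ∘ w) F a)
    (hG : ∀ a, G a = c + X * childSum (C ∘ w) G a) (a : ℕ) : F a = G a := by
  ext n
  induction n generalizing a with
  | zero => rw [hF, hG]; simp
  | succ n ih => rw [hF, hG]; simp [childSum, coeff_succ_X_mul, ih]

lemma treeSeries_succ (w : ℕ → R) (a : ℕ) :
    treeSeries w (a + 1) =
      (1 + X * (C (w 0) * treeSeries w 1)) * treeSeries (fun v => w (v + 1)) a := by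
  set c := 1 + X * (C (w 0) * treeSeries w 1) with hc
  refine eq_of_eq_add_X_mul_childSum (w := fun v => w (v + 1)) (c := c)
    (F := fun a => treeSeries w (a + 1)) (G := fun a => c * treeSeries (fun v => w (v + 1)) a)
    (fun a => ?_) (fun a => ?_) a
  · rw [treeSeries_eq_one_add, hc]
    simp only [childSum, sum_range_succ', Function.comp_apply]
    ring
  · rw [treeSeries_eq_one_add]
    simp only [childSum, mul_add, mul_sum, mul_one, mul_left_comm]

lemma rescale_C (p c : R) : rescale p (C c) = C c := by
  ext n
  by_cases hn : n = 0 <;> simp [coeff_C, hn]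

/-- Generating function of the tree for the weights `w v = q * p ^ v`, seen from its root; its
coefficients turn out to be the `q,p`-Catalan polynomials. -/
def qpCatalanSeries (q p : R) : R⟦X⟧ :=
  treeSeries (fun v => q * p ^ v) 0

lemma constantCoeff_qpCatalanSeries (q p : R) : constantCoeff (qpCatalanSeries q p) = 1 := by
  simp [← coeff_zero_eq_constantCoeff_apply, qpCatalanSeries, treeSeries]

end GeneratingTree

section FunctionalEquations

open PowerSeries

variable {R : Type*} [CommRing R]

lemma qpCatalanSeries_eq (q p : R) :
    qpCatalanSeries q p = 1 + X * (qpCatalanSeries (q * p) p *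
      (1 + C q * (qpCatalanSeries q p - 1))) := by
  have hroot : qpCatalanSeries q p = 1 + X * treeSeries (fun v => q * p ^ v) 1 := by
    simpa [qpCatalanSeries, childSum] using treeSeries_eq_one_add (fun v => q * p ^ v) 0
  have hreturn : treeSeries (fun v => q * p ^ v) 1 =
      (1 + X * (C q * treeSeries (fun v => q * p ^ v) 1)) * qpCatalanSeries (q * p) p := by
    simpa [qpCatalanSeries, pow_succ', mul_assoc] using treeSeries_succ (fun v => q * p ^ v) 0
  linear_combination (1 - X * C q * qpCatalanSeries (q * p) p) * hroot + X * hreturn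

/-- The difference of the two sides of the functional equation that encodes the recurrence of the
`q,p`-Catalan polynomials, see `qpCatalanSeries_eq_rescale`. -/
noncomputable def qpCatalanDefect (q p : R) : R⟦X⟧ :=
  qpCatalanSeries q p - 1 - X * (qpCatalanSeries q p +
    C q * (rescale p (qpCatalanSeries q p) * (qpCatalanSeries q p - 1)))

lemma qpCatalanDefect_mul (q p : R) :
    qpCatalanDefect q p * ((1 - X * (C q * qpCatalanSeries (q * p) p)) *
      (1 - X * (C (q * p) * rescale p (qpCatalanSeries (q * p) p)))) =
        X * qpCatalanDefect (q * p) p := by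
  have heq := qpCatalanSeries_eq q p
  have hrescale := congrArg (rescale p) heq
  simp only [map_add, map_mul, map_sub, map_one, rescale_X, rescale_C] at hrescale
  simp only [qpCatalanDefect, map_mul]
  linear_combination
    (1 - X * (C q * C p * rescale p (qpCatalanSeries (q * p) p))) *
      (1 - X - X * (C q * rescale p (qpCatalanSeries q p))) * heq -
    X * (C q * (X * qpCatalanSeries (q * p) p)) * hrescale

lemma qpCatalanDefect_eq_zero (q p : R) : qpCatalanDefect q p = 0 := by
  have hdvd (n : ℕ) : ∀ q : R, X ^ n ∣ qpCatalanDefect q p := by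
    induction n with
    | zero => simp
    | succ n ih =>
      intro q
      have hunit : IsUnit ((1 - X * (C q * qpCatalanSeries (q * p) p)) *
          (1 - X * (C (q * p) * rescale p (qpCatalanSeries (q * p) p)))) := by
        simp [isUnit_iff_constantCoeff]
      rw [← hunit.dvd_mul_right, qpCatalanDefect_mul, pow_succ']
      exact mul_dvd_mul_left X (ih (q * p))
  ext n
  exact X_pow_dvd_iff.1 (hdvd (n + 1) q) n n.lt_succ_self

lemma qpCatalanSeries_eq_rescale (q p : R) :
    qpCatalanSeries q p = 1 + X * (qpCatalanSeries q p +
      C q * (rescale p (qpCatalanSeries q p) * (qpCatalanSeries q p - 1))) := by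
  rw [← sub_eq_zero, ← sub_sub]
  exact qpCatalanDefect_eq_zero q p

lemma coeff_qpCatalanSeries_add_two (q p : R) (n : ℕ) :
    coeff (n + 2) (qpCatalanSeries q p) = coeff (n + 1) (qpCatalanSeries q p) +
      q * ∑ k ∈ range (n + 1), p ^ k * coeff k (qpCatalanSeries q p) *
        coeff (n + 1 - k) (qpCatalanSeries q p) := by
  have hzero : coeff 0 (qpCatalanSeries q p - 1) = 0 := by
    simp [constantCoeff_qpCatalanSeries]
  have hpos {m : ℕ} (hm : m ≠ 0) :
      coeff m (qpCatalanSeries q p - 1) = coeff m (qpCatalanSeries q p) := by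
    simp [coeff_one, hm]
  conv_lhs => rw [qpCatalanSeries_eq_rescale]
  rw [map_add, coeff_one, if_neg (by omega), zero_add, coeff_succ_X_mul, map_add, coeff_C_mul,
    coeff_mul, Nat.sum_antidiagonal_eq_sum_range_succ_mk, sum_range_succ, Nat.sub_self, hzero,
    mul_zero, add_zero]
  congr 2
  refine sum_congr rfl fun k hk => ?_
  rw [coeff_rescale, hpos (Nat.sub_ne_zero_of_lt (mem_range.1 hk))]

end FunctionalEquations

section Insertion

variable {n : ℕ}

/-- The permutation with first value `v` whose remaining values are order-isomorphic to `σ`. -/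
def consPerm (v : Fin (n + 1)) (σ : Perm (Fin n)) : Perm (Fin (n + 1)) :=
  ((finSuccEquiv' 0).trans (optionCongr σ)).trans (finSuccEquiv' v).symm

@[simp]
lemma consPerm_zero (v : Fin (n + 1)) (σ : Perm (Fin n)) : consPerm v σ 0 = v := by
  simp [consPerm]

@[simp]
lemma consPerm_succ (v : Fin (n + 1)) (σ : Perm (Fin n)) (i : Fin n) :
    consPerm v σ i.succ = v.succAbove (σ i) := by
  simp [consPerm, finSuccEquiv'_zero]

lemma consPerm_injective :
    Function.Injective fun x : Fin (n + 1) × Perm (Fin n) => consPerm x.1 x.2 := by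
  rintro ⟨v, σ⟩ ⟨w, τ⟩ h
  obtain rfl : v = w := by simpa using DFunLike.congr_fun h 0
  have hστ : σ = τ := Equiv.ext fun i => by simpa using DFunLike.congr_fun h i.succ
  rw [hστ]

lemma consPerm_bijective :
    Function.Bijective fun x : Fin (n + 1) × Perm (Fin n) => consPerm x.1 x.2 :=
  (Fintype.bijective_iff_injective_and_card _).2
    ⟨consPerm_injective, by simp [Fintype.card_perm, Nat.factorial_succ]⟩

lemma val_succAbove (v : Fin (n + 1)) (x : Fin n) :
    (v.succAbove x : ℕ) = if (x : ℕ) < v then (x : ℕ) else x + 1 := by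
  grind [Fin.succAbove]

lemma succAbove_lt_self_iff (v : Fin (n + 1)) (x : Fin n) : v.succAbove x < v ↔ (x : ℕ) < v := by
  rw [Fin.succAbove_lt_iff_castSucc_lt, Fin.lt_def, Fin.val_castSucc]

lemma avoids_p321_iff (σ : Perm (Fin n)) :
    Avoids σ p321 ↔ ∀ i j k, i < j → j < k → σ j < σ i → σ j ≤ σ k := by
  constructor
  · intro h i j k hij hjk hji
    by_contra! hkj
    refine h ⟨![i, j, k], ?_, fun a b => ?_⟩
    · simp [Fin.strictMono_iff_lt_succ, Fin.forall_fin_two, hij, hjk]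
    · have hki := hkj.trans hji
      have e0 : p321 0 = 2 := by decide
      have e1 : p321 1 = 1 := by decide
      have e2 : p321 2 = 0 := by decide
      fin_cases a <;> fin_cases b <;>
        simp [e0, e1, e2, hkj, hji, hki, hkj.le, hji.le, hki.le]
  · rintro h ⟨f, hf, hfσ⟩
    exact ((hfσ 2 1).2 (by decide)).not_ge <|
      h (f 0) (f 1) (f 2) (hf (by decide)) (hf (by decide)) ((hfσ 1 0).2 (by decide))

/-- The values of `σ` smaller than `a` appear in increasing order. -/
def IncreasingBelow (σ : Perm (Fin n)) (a : ℕ) : Prop :=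
  ∀ i j, i < j → (σ i : ℕ) < a → σ i ≤ σ j

lemma IncreasingBelow.mono {σ : Perm (Fin n)} {a b : ℕ} (h : IncreasingBelow σ b) (hab : a ≤ b) :
    IncreasingBelow σ a :=
  fun i j hij ha => h i j hij (ha.trans_le hab)

lemma increasingBelow_zero (σ : Perm (Fin n)) : IncreasingBelow σ 0 :=
  fun _ _ _ hi => absurd hi (Nat.not_lt_zero _)

lemma IncreasingBelow.apply_le {σ : Perm (Fin n)} {a : ℕ} (h : IncreasingBelow σ a) {j : Fin n}
    (hj : (σ j : ℕ) < a) : σ j ≤ j := by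
  have hmaps : Set.MapsTo σ.symm (Iio (σ j)) (Iio j) := by
    intro u hu
    rw [mem_coe, mem_Iio] at hu ⊢
    by_contra! hle
    have hne : j ≠ σ.symm u := by
      rintro rfl
      simp at hu
    have huj : σ j ≤ u := by simpa using h j (σ.symm u) (lt_of_le_of_ne hle hne) hj
    exact huj.not_gt hu
  simpa using card_le_card_of_injOn σ.symm hmaps σ.symm.injective.injOn

lemma avoids_consPerm_iff (v : Fin (n + 1)) (σ : Perm (Fin n)) :
    Avoids (consPerm v σ) p321 ↔ Avoids σ p321 ∧ IncreasingBelow σ v := by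
  simp [avoids_p321_iff, Fin.forall_fin_succ, IncreasingBelow, succAbove_lt_self_iff, and_comm]

open scoped Classical in
/-- The label of `σ` in the generating tree: the largest `a ≤ n` such that the values of `σ` smaller
than `a` appear in increasing order. -/
noncomputable def treeLabel (σ : Perm (Fin n)) : ℕ :=
  Nat.findGreatest (IncreasingBelow σ) n

lemma le_treeLabel_iff (σ : Perm (Fin n)) (a : ℕ) :
    a ≤ treeLabel σ ↔ a ≤ n ∧ IncreasingBelow σ a := by
  classical
  refine ⟨fun h => ⟨h.trans (Nat.findGreatest_le n), ?_⟩, fun h => Nat.le_findGreatest h.1 h.2⟩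
  exact (Nat.findGreatest_spec n.zero_le (increasingBelow_zero σ)).mono h

lemma increasingBelow_consPerm_zero_iff (σ : Perm (Fin n)) (a : ℕ) :
    IncreasingBelow (consPerm 0 σ) (a + 1) ↔ IncreasingBelow σ a := by
  simp [IncreasingBelow, Fin.forall_fin_succ]

lemma treeLabel_consPerm_zero (σ : Perm (Fin n)) :
    treeLabel (consPerm 0 σ) = treeLabel σ + 1 := by
  refine eq_of_forall_le_iff fun a => ?_
  cases a with
  | zero => simp
  | succ a =>
    rw [le_treeLabel_iff, increasingBelow_consPerm_zero_iff, Nat.add_le_add_iff_right,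
      Nat.add_le_add_iff_right, le_treeLabel_iff]

lemma increasingBelow_consPerm {v : Fin (n + 1)} {σ : Perm (Fin n)} (h : IncreasingBelow σ v) :
    IncreasingBelow (consPerm v σ) v := by
  simpa [IncreasingBelow, Fin.forall_fin_succ, succAbove_lt_self_iff] using h

lemma not_increasingBelow_consPerm_succ (v : Fin n) (σ : Perm (Fin n)) :
    ¬ IncreasingBelow (consPerm v.succ σ) (v + 2) := fun h => by
  simpa [Fin.le_def] using h 0 (σ.symm v).succ (Fin.succ_pos _) (by simp)

lemma treeLabel_consPerm_succ {v : Fin n} {σ : Perm (Fin n)} (h : IncreasingBelow σ (v + 1)) :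
    treeLabel (consPerm v.succ σ) = v + 1 := by
  refine le_antisymm ?_ ((le_treeLabel_iff _ _).2 ⟨by omega, ?_⟩)
  · by_contra! hlt
    exact not_increasingBelow_consPerm_succ v σ ((le_treeLabel_iff _ _).1 hlt).2
  · simpa using increasingBelow_consPerm (v := v.succ) (by simpa using h)

lemma treeLabel_consPerm {v : Fin (n + 1)} {σ : Perm (Fin n)} (h : IncreasingBelow σ v) :
    treeLabel (consPerm v σ) = if (v : ℕ) = 0 then treeLabel σ + 1 else v := by
  cases v using Fin.cases with
  | zero => simp [treeLabel_consPerm_zero]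
  | succ v => simp [treeLabel_consPerm_succ h]

lemma exc_consPerm {v : Fin (n + 1)} {σ : Perm (Fin n)}
    (h : ∀ i, (σ i : ℕ) < v → σ i ≤ i) :
    exc (consPerm v σ) = exc σ + if (v : ℕ) = 0 then 0 else 1 := by
  have hexc (i : Fin n) : (i : ℕ) + 1 < v.succAbove (σ i) ↔ (i : ℕ) < σ i := by
    have := h i
    rw [Fin.le_def] at this
    rw [val_succAbove]
    split_ifs <;> omega
  simp only [exc, Fin.card_filter_univ_succ', consPerm_zero, consPerm_succ, Fin.val_succ,
    Fin.val_zero, hexc, add_comm]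
  split_ifs <;> omega

/-- The pair `(i, j)` is a crossing of `σ`. -/
def IsCrossing (σ : Perm (Fin n)) (i j : Fin n) : Prop :=
  ((i : ℕ) < j ∧ (j : ℕ) < σ i ∧ (σ i : ℕ) < σ j) ∨ ((σ i : ℕ) < σ j ∧ (σ j : ℕ) ≤ i ∧ (i : ℕ) < j)

instance (σ : Perm (Fin n)) (i j : Fin n) : Decidable (IsCrossing σ i j) :=
  inferInstanceAs (Decidable (_ ∨ _))

lemma crs_eq_sum_card (σ : Perm (Fin n)) : crs σ = ∑ i, #{j | IsCrossing σ i j} := by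
  simp only [crs, card_filter, Fintype.sum_prod_type]
  rfl

lemma not_isCrossing_zero_right (σ : Perm (Fin (n + 1))) (i : Fin (n + 1)) :
    ¬ IsCrossing σ i 0 := by
  simp [IsCrossing]

lemma isCrossing_consPerm_zero_succ_iff {v : Fin (n + 1)} {σ : Perm (Fin n)} {j : Fin n} :
    IsCrossing (consPerm v σ) 0 j.succ ↔ (j : ℕ) + 1 < v ∧ ¬ (σ j : ℕ) < v := by
  simp only [IsCrossing, consPerm_succ, consPerm_zero, val_succAbove, Fin.val_succ, Fin.val_zero]
  split_ifs <;> omega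

/-
Prepending `v` shifts all positions but not the values below `v`, which weakens the condition
`σ j ≤ i` of a crossing to `σ j ≤ i + 1` for such values.
-/
lemma isCrossing_consPerm_succ_succ_iff {v : Fin (n + 1)} {σ : Perm (Fin n)}
    (h : ∀ i, (σ i : ℕ) < v → σ i ≤ i) {i j : Fin n} :
    IsCrossing (consPerm v σ) i.succ j.succ ↔
      IsCrossing σ i j ∨ ((i : ℕ) + 1 < v ∧ (σ i : ℕ) < v) ∧ (σ j : ℕ) = i + 1 := by
  have hi := h i
  have hj := h j
  simp only [Fin.le_def] at hi hj
  simp only [IsCrossing, consPerm_succ, val_succAbove, Fin.val_succ]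
  split_ifs <;> omega

lemma card_isCrossing_consPerm_succ {v : Fin (n + 1)} {σ : Perm (Fin n)}
    (h : ∀ i, (σ i : ℕ) < v → σ i ≤ i) (i : Fin n) :
    #{j | IsCrossing (consPerm v σ) i.succ j} =
      #{j | IsCrossing σ i j} + if (i : ℕ) + 1 < v ∧ (σ i : ℕ) < v then 1 else 0 := by
  simp only [Fin.card_filter_univ_succ', not_isCrossing_zero_right, if_false, zero_add,
    isCrossing_consPerm_succ_succ_iff h]
  split_ifs with hi
  · obtain ⟨k, hk⟩ := σ.surjective ⟨i + 1, by omega⟩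
    have hjk (j : Fin n) : (σ j : ℕ) = i + 1 ↔ j = k := by
      rw [← σ.injective.eq_iff, hk, Fin.ext_iff]
    have hnot : ¬ IsCrossing σ i k := by
      simp only [IsCrossing, hk]
      omega
    rw [← card_insert_of_notMem (a := k) (by simpa using hnot)]
    congr 1
    ext j
    simp [hi, hjk, or_comm]
  · simp [hi]

lemma crs_consPerm {v : Fin (n + 1)} {σ : Perm (Fin n)} (h : ∀ i, (σ i : ℕ) < v → σ i ≤ i) :
    crs (consPerm v σ) = crs σ + (v - 1) := by
  have hfirst : #{j | IsCrossing (consPerm v σ) 0 j} =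
      #{j : Fin n | (j : ℕ) + 1 < v ∧ ¬ (σ j : ℕ) < v} := by
    simp [Fin.card_filter_univ_succ', not_isCrossing_zero_right, isCrossing_consPerm_zero_succ_iff]
  have hcount : #{j : Fin n | (j : ℕ) + 1 < v ∧ (σ j : ℕ) < v} +
      #{j : Fin n | (j : ℕ) + 1 < v ∧ ¬ (σ j : ℕ) < v} = v - 1 := by
    rw [← filter_filter, ← filter_filter, card_filter_add_card_filter_not]
    simp only [← Nat.lt_sub_iff_add_lt, Fin.card_filter_val_lt]
    omega
  rw [crs_eq_sum_card, crs_eq_sum_card, Fin.sum_univ_succ, hfirst]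
  simp only [card_isCrossing_consPerm_succ h, sum_add_distrib, ← card_filter]
  omega

open scoped Classical in
lemma sum_increasingBelow {M : Type*} [AddCommMonoid M] (σ : Perm (Fin n)) (g : ℕ → M) :
    ∑ v ∈ univ.filter fun v : Fin (n + 1) => IncreasingBelow σ v, g v =
      ∑ v ∈ range (treeLabel σ + 1), g v := by
  rw [sum_filter, Fin.sum_univ_eq_sum_range (fun v => if IncreasingBelow σ v then g v else 0),
    ← sum_filter]
  congr 1
  ext a
  simp [le_treeLabel_iff]

open scoped Classical in
lemma sum_avoids_p321_succ {M : Type*} [AddCommMonoid M] (g : Perm (Fin (n + 1)) → M) :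
    ∑ τ with Avoids τ p321, g τ =
      ∑ σ with Avoids σ p321,
        ∑ v ∈ univ.filter fun v : Fin (n + 1) => IncreasingBelow σ v, g (consPerm v σ) := by
  simp only [sum_filter]
  rw [← consPerm_bijective.sum_comp, Fintype.sum_prod_type_right]
  refine sum_congr rfl fun σ _ => ?_
  by_cases hσ : Avoids σ p321 <;> simp [avoids_consPerm_iff, hσ]

open scoped Classical in
lemma sum_increasingBelow_consPerm {R : Type*} [CommSemiring R] (q p : R) (f : ℕ → R)
    (σ : Perm (Fin n)) :
    ∑ v ∈ univ.filter fun v : Fin (n + 1) => IncreasingBelow σ v,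
        q ^ exc (consPerm v σ) * p ^ crs (consPerm v σ) * f (treeLabel (consPerm v σ)) =
      q ^ exc σ * p ^ crs σ * childSum (fun v => q * p ^ v) f (treeLabel σ) := by
  let g (v : ℕ) : R := q ^ (exc σ + if v = 0 then 0 else 1) * p ^ (crs σ + (v - 1)) *
    f (if v = 0 then treeLabel σ + 1 else v)
  calc
    _ = ∑ v ∈ univ.filter fun v : Fin (n + 1) => IncreasingBelow σ v, g v := by
      refine sum_congr rfl fun v hv => ?_
      have hv : IncreasingBelow σ v := (mem_filter.1 hv).2
      rw [exc_consPerm fun _ => hv.apply_le, crs_consPerm fun _ => hv.apply_le,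
        treeLabel_consPerm hv]
    _ = ∑ v ∈ range (treeLabel σ), g (v + 1) + g 0 := by
      rw [sum_increasingBelow, sum_range_succ']
    _ = _ := by
      simp [g, childSum, mul_add, mul_sum, add_comm, pow_succ, pow_add, mul_assoc, mul_left_comm]

open scoped Classical in
lemma sum_avoids_p321_eq_iterate_childSum {R : Type*} [CommSemiring R] (q p : R) (n : ℕ)
    (f : ℕ → R) :
    ∑ σ : Perm (Fin n) with Avoids σ p321, q ^ exc σ * p ^ crs σ * f (treeLabel σ) =
      (childSum fun v => q * p ^ v)^[n] f 0 := by
  induction n generalizing f with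
  | zero =>
    have h (σ : Perm (Fin 0)) : Avoids σ p321 := (avoids_p321_iff σ).2 fun i => i.elim0
    simp [h, exc, crs, treeLabel]
  | succ n ih =>
    simp only [sum_avoids_p321_succ, sum_increasingBelow_consPerm, ih, Function.iterate_succ_apply]

open scoped Classical in
lemma sum_avoids_p321_eq_coeff_qpCatalanSeries {R : Type*} [CommSemiring R] (q p : R) (n : ℕ) :
    ∑ σ : Perm (Fin n) with Avoids σ p321, q ^ exc σ * p ^ crs σ =
      PowerSeries.coeff n (qpCatalanSeries q p) := by
  simpa [qpCatalanSeries, treeSeries] using sum_avoids_p321_eq_iterate_childSum q p n 1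

end Insertion

open MvPolynomial in
lemma coeff_qpCatalanSeries_X (n : ℕ) :
    PowerSeries.coeff n (qpCatalanSeries (X true : MvPolynomial Bool ℤ) (X false)) =
      qpCatalan n := by
  induction n using Nat.strong_induction_on with
  | _ n ih =>
    match n with
    | 0 => simp [constantCoeff_qpCatalanSeries, qpCatalan]
    | 1 => simp [qpCatalanSeries, treeSeries, childSum, qpCatalan]
    | n + 2 =>
      rw [coeff_qpCatalanSeries_add_two, qpCatalan, ih (n + 1) (by omega),
        sum_attach (range (n + 1)) fun k => (X false : MvPolynomial Bool ℤ) ^ k *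
          qpCatalan k * qpCatalan (n + 1 - k)]
      refine congrArg (fun S => _ + X true * S) (sum_congr rfl fun k hk => ?_)
      have hk := mem_range.1 hk
      rw [ih k (by omega), ih (n + 1 - k) (by omega)]

open scoped Classical in
open MvPolynomial in
/-- `Σ_{σ ∈ S_n(321)} q^{exc σ} p^{crs σ} = C_n(q,p)`. -/
theorem sum_exc_crs_avoid321_eq_qpCatalan (n : ℕ) :
    ∑ σ ∈ Finset.univ.filter (fun σ : Equiv.Perm (Fin n) => Avoids σ p321),
      (X true : MvPolynomial Bool ℤ) ^ (exc σ) * (X false : MvPolynomial Bool ℤ) ^ (crs σ)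
      = qpCatalan n := by
  rw [sum_avoids_p321_eq_coeff_qpCatalanSeries, coeff_qpCatalanSeries_X]
end

section
/- For every 321-avoiding permutation σ of [n], the number of inversions equals the number of crossings plus the number of excedances: inv(σ) = crs(σ) + exc(σ). -/
open Equiv Finset

/-!
Let `r i` and `l i` count the inversions in which `i` is the left, respectively the right,
position. Counting `{j | j < i ∨ σ j < σ i}` in two ways gives `r i - l i = σ i - i`. A nesting is
an inversion whose right position is an excedance or whose left position is not one, so
`nes σ = ∑ i, min (l i) (r i)`, and hence `inv σ = nes σ + ∑ i, (σ i - i)⁺`. The last sum counts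
the points of the intervals `(i, σ i]`, that is, one endpoint for each excedance and the pairs
`i < m < σ i`. As many arcs of `σ` cross the gap after `m` leftwards as rightwards, so these pairs
can be counted by the arcs over `m` on the same side as the arc starting at `m`, each of which forms
one crossing or one nesting with it. Altogether `inv σ = crs σ + 2 nes σ + exc σ`, and if `σ` avoids
321 then `l i = 0` or `r i = 0` for every `i`, so that `nes σ = 0`.
-/

theorem card_filter_comp_equiv {α β : Type*} [Fintype α] [Fintype β] (e : α ≃ β) (p : β → Prop)
    [DecidablePred p] : #{a | p (e a)} = #{b | p b} :=
  card_equiv e (by simp)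

theorem card_filter_prod_or_eq_sum {α : Type*} [Fintype α] {p q : α → α → Prop}
    [∀ a b, Decidable (p a b)] [∀ a b, Decidable (q a b)] (hpq : ∀ a b, p a b → ¬q a b) :
    #{x : α × α | p x.1 x.2 ∨ q x.1 x.2} = ∑ a, (#{b | p b a} + #{b | q a b}) := by
  classical
  rw [filter_or, card_union_of_disjoint (disjoint_filter.2 fun x _ => hpq x.1 x.2), sum_add_distrib]
  simp only [card_filter, Fintype.sum_prod_type, sum_comm (f := fun a b => if p b a then 1 else 0)]

theorem card_filter_lt_add_card_filter_gt {α β : Type*} [LinearOrder β] {s : Finset α} {f : α → β}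
    {b : β} (hb : ∀ a ∈ s, f a ≠ b) : #{a ∈ s | f a < b} + #{a ∈ s | b < f a} = #s := by
  have hgt : {a ∈ s | b < f a} = {a ∈ s | ¬f a < b} :=
    filter_congr fun a ha => by rw [not_lt, (hb a ha).symm.le_iff_lt]
  rw [hgt, card_filter_add_card_filter_not]

section

variable {n : ℕ} (σ : Equiv.Perm (Fin n))

/-- The positions to the right of `i` that form an inversion of `σ` with `i`. -/
def rightInversions (i : Fin n) : Finset (Fin n) :=
  {j | i < j ∧ σ j < σ i}

/-- The positions to the left of `i` that form an inversion of `σ` with `i`. -/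
def leftInversions (i : Fin n) : Finset (Fin n) :=
  {j | j < i ∧ σ i < σ j}

/-- The depth of a permutation: the sum of `σ i - i` over the excedances `i` of `σ`. Truncated
subtraction makes the other summands vanish. -/
def depth : ℕ :=
  ∑ i, ((σ i : ℕ) - i)

theorem invStat_eq_sum_card_rightInversions : invStat σ = ∑ i, #(rightInversions σ i) := by
  simp only [invStat, rightInversions, card_filter, Fintype.sum_prod_type]

theorem rightInversions_eq_sdiff (i : Fin n) :
    rightInversions σ i = ({j | σ j < σ i} : Finset (Fin n)) \ ({j | j < i} : Finset (Fin n)) := by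
  ext j
  have : i = j → σ i = σ j := congrArg σ
  simp only [rightInversions, mem_filter_univ, mem_sdiff]
  grind

theorem leftInversions_eq_sdiff (i : Fin n) :
    leftInversions σ i = ({j | j < i} : Finset (Fin n)) \ ({j | σ j < σ i} : Finset (Fin n)) := by
  ext j
  have : σ i = σ j → i = j := fun h => σ.injective h
  simp only [leftInversions, mem_filter_univ, mem_sdiff]
  grind

theorem card_rightInversions_add (i : Fin n) :
    #(rightInversions σ i) + i = #(leftInversions σ i) + σ i := by
  have hpos : #{j | j < i} = (i : ℕ) := by rw [filter_gt_eq_Iio, Fin.card_Iio]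
  have hval : #{j | σ j < σ i} = (σ i : ℕ) := by
    rw [card_filter_comp_equiv σ (· < σ i), filter_gt_eq_Iio, Fin.card_Iio]
  calc #(rightInversions σ i) + i
      = #(({j | σ j < σ i} : Finset (Fin n)) ∪ ({j | j < i} : Finset (Fin n))) := by
        rw [rightInversions_eq_sdiff, ← card_sdiff_add_card, hpos]
    _ = #(leftInversions σ i) + σ i := by
        rw [leftInversions_eq_sdiff, union_comm, ← card_sdiff_add_card, hval]

theorem crs_eq_sum : crs σ =
    ∑ m, (#{i | i < m ∧ m < σ i ∧ σ i < σ m} + #{i | σ m < σ i ∧ σ i ≤ m ∧ m < i}) :=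
  card_filter_prod_or_eq_sum
    (p := fun i j => i < j ∧ j < σ i ∧ σ i < σ j) (q := fun i j => σ i < σ j ∧ σ j ≤ i ∧ i < j)
    (by grind)

theorem nes_eq_sum : nes σ =
    ∑ m, (#{i | i < m ∧ m < σ m ∧ σ m < σ i} + #{i | σ i < σ m ∧ σ m ≤ m ∧ m < i}) :=
  card_filter_prod_or_eq_sum
    (p := fun i j => i < j ∧ j < σ j ∧ σ j < σ i) (q := fun i j => σ j < σ i ∧ σ i ≤ i ∧ i < j)
    (by grind)

theorem nes_eq_sum_min :
    nes σ = ∑ i, min #(leftInversions σ i) #(rightInversions σ i) := by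
  rw [nes_eq_sum]
  refine sum_congr rfl fun i _ => ?_
  have hcard := card_rightInversions_add σ i
  obtain hi | hi := lt_or_ge i (σ i)
  · have hmin : #(leftInversions σ i) ≤ #(rightInversions σ i) := by lia
    rw [min_eq_left hmin]
    simp [leftInversions, hi, hi.not_ge]
  · have hmin : #(rightInversions σ i) ≤ #(leftInversions σ i) := by lia
    rw [min_eq_right hmin]
    simp [rightInversions, hi, hi.not_gt, and_comm]

theorem invStat_eq_nes_add_depth : invStat σ = nes σ + depth σ := by
  rw [invStat_eq_sum_card_rightInversions, nes_eq_sum_min, depth, ← sum_add_distrib]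
  refine sum_congr rfl fun i _ => ?_
  have hcard := card_rightInversions_add σ i
  lia

theorem card_filter_apply_le_lt_eq (m : Fin n) :
    #{i | σ i ≤ m ∧ m < i} = #{i | i ≤ m ∧ m < σ i} := by
  have hcard : #{i | σ i ≤ m} = #{i | i ≤ m} := card_filter_comp_equiv σ (· ≤ m)
  simpa only [← filter_and_not, not_le] using card_sdiff_comm hcard

theorem card_crossings_add_card_nestings_of_lt_apply {m : Fin n} (hm : m < σ m) :
    #{i | i < m ∧ m < σ i ∧ σ i < σ m} + #{i | i < m ∧ σ m < σ i} =
      #{i | i < m ∧ m < σ i} := by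
  have hne : ∀ i ∈ ({i | i < m ∧ m < σ i} : Finset (Fin n)), σ i ≠ σ m :=
    fun i hi => σ.injective.ne (mem_filter_univ i |>.1 hi).1.ne
  rw [← card_filter_lt_add_card_filter_gt hne, filter_filter, filter_filter]
  congr 2 <;> grind

theorem card_crossings_add_card_nestings_of_apply_le {m : Fin n} (hm : σ m ≤ m) :
    #{i | σ m < σ i ∧ σ i ≤ m ∧ m < i} + #{i | σ i < σ m ∧ m < i} =
      #{i | i < m ∧ m < σ i} := by
  have harcs : #{i | σ i ≤ m ∧ m < i} = #{i | i < m ∧ m < σ i} := by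
    rw [card_filter_apply_le_lt_eq]
    congr 1
    grind
  have hne : ∀ i ∈ ({i | σ i ≤ m ∧ m < i} : Finset (Fin n)), σ i ≠ σ m :=
    fun i hi => σ.injective.ne (mem_filter_univ i |>.1 hi).2.ne'
  rw [← harcs, add_comm, ← card_filter_lt_add_card_filter_gt hne, filter_filter, filter_filter]
  congr 2 <;> grind

theorem crs_add_nes_eq_sum : crs σ + nes σ = ∑ m, #{i | i < m ∧ m < σ i} := by
  rw [crs_eq_sum, nes_eq_sum, ← sum_add_distrib]
  refine sum_congr rfl fun m _ => ?_
  obtain hm | hm := lt_or_ge m (σ m)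
  · have hlower : #{i | σ m < σ i ∧ σ i ≤ m ∧ m < i} = 0 := by
      simp only [card_eq_zero, filter_eq_empty_iff]
      grind
    rw [hlower, ← card_crossings_add_card_nestings_of_lt_apply σ hm]
    simp [hm, hm.not_ge]
  · have hupper : #{i | i < m ∧ m < σ i ∧ σ i < σ m} = 0 := by
      simp only [card_eq_zero, filter_eq_empty_iff]
      grind
    rw [hupper, ← card_crossings_add_card_nestings_of_apply_le σ hm]
    simp [hm, hm.not_gt]

theorem depth_eq_crs_add_nes_add_exc : depth σ = crs σ + nes σ + exc σ := by
  have hswap : ∑ m, #{i | i < m ∧ m < σ i} = ∑ i, #{m | i < m ∧ m < σ i} :=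
    (sum_card_bipartiteAbove_eq_sum_card_bipartiteBelow fun i m => i < m ∧ m < σ i).symm
  rw [crs_add_nes_eq_sum, hswap, exc, card_filter, ← sum_add_distrib]
  refine sum_congr rfl fun i _ => ?_
  rw [filter_lt_lt_eq_Ioo, Fin.card_Ioo]
  split_ifs <;> lia

theorem invStat_eq_crs_add_two_mul_nes_add_exc :
    invStat σ = crs σ + 2 * nes σ + exc σ := by
  rw [invStat_eq_nes_add_depth, depth_eq_crs_add_nes_add_exc]
  ring

variable {σ}

theorem contains_p321_of_lt_of_lt {i j k : Fin n} (hij : i < j) (hjk : j < k)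
    (hσkj : σ k < σ j) (hσji : σ j < σ i) : Contains σ p321 := by
  refine ⟨![i, j, k], Fin.strictMono_iff_lt_succ.2 ?_, ?_⟩
  · simp [Fin.forall_fin_succ, hij, hjk]
  · have hp : p321 = Fin.revPerm := by decide
    have hanti : StrictAnti (σ ∘ ![i, j, k]) := Fin.strictAnti_iff_succ_lt.2 <| by
      simp [Fin.forall_fin_succ, hσkj, hσji]
    intro a b
    rw [hp, Fin.revPerm_apply, Fin.revPerm_apply, Fin.rev_lt_rev]
    exact hanti.lt_iff_gt

theorem Avoids.leftInversions_eq_empty_or_rightInversions_eq_empty (h : Avoids σ p321)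
    (j : Fin n) : leftInversions σ j = ∅ ∨ rightInversions σ j = ∅ := by
  by_contra! hne
  obtain ⟨⟨i, hi⟩, ⟨k, hk⟩⟩ := hne
  rw [leftInversions, mem_filter_univ] at hi
  rw [rightInversions, mem_filter_univ] at hk
  exact h (contains_p321_of_lt_of_lt hi.1 hk.1 hk.2 hi.2)

theorem Avoids.nes_eq_zero (h : Avoids σ p321) : nes σ = 0 := by
  rw [nes_eq_sum_min]
  refine sum_eq_zero fun i _ => ?_
  obtain hi | hi := h.leftInversions_eq_empty_or_rightInversions_eq_empty i <;> simp [hi]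

end

/-- For a 321-avoiding permutation, `inv = crs + exc`. -/
theorem invStat_eq_crs_add_exc_of_avoids321 {n : ℕ} (σ : Equiv.Perm (Fin n))
    (h : Avoids σ p321) : invStat σ = crs σ + exc σ := by
  rw [invStat_eq_crs_add_two_mul_nes_add_exc, h.nes_eq_zero, mul_zero, add_zero]
end

section
/- Let σ be a 132-avoiding permutation of [n] and T(σ) = {i ∈ [n] : i < σ(i) and i < σ^{−1}(i)}. Then: (a) T(σ) = ∅ if and only if σ(1) = 1; (b) if j ∈ T(σ) then every integer i with 1 ≤ i ≤ j satisfies i ∈ T(σ); (c) 2·|T(σ)| ≤ n; and (e) if k = 1 + |T(σ)|, then the permutation σ^{(k,k)} obtained by inserting the value k at position k is a 132-avoiding permutation of [n+1]. -/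
/-!
View `σ` as the set of points `(i, σ i)`. If `σ` avoids 132, then `i ∈ T(σ)` exactly when the box
`[0, i] × [0, i]` contains no point of `σ`: a point of the box, together with `(i, σ i)` and
`(σ⁻¹ i, i)`, would form the pattern 132. Hence `T(σ)` is an initial segment `[0, k)`. It is
disjoint from its image under `σ`, since `i < σ i` for `i ∈ T(σ)` and `σ i < i` if also
`σ i ∈ T(σ)`; this gives `2 k ≤ n` when `σ` permutes `n` letters.

The point inserted at `(k, k)` cannot play the 3 or the 2 of a pattern 132, as the box
`[0, k) × [0, k)` to its lower left is empty. If it played the 1, then so could a point of `σ` in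
the box `[0, k] × [0, k]`, which is nonempty because `k ∉ T(σ)`.
-/

open Equiv Finset

/-- `T(σ) = {i : i < σ(i) and i < σ⁻¹(i)}`. -/
def Tset {n : ℕ} (σ : Equiv.Perm (Fin n)) : Finset (Fin n) :=
  Finset.univ.filter (fun i : Fin n => (i : ℕ) < σ i ∧ (i : ℕ) < σ⁻¹ i)

lemma Tset_card_lt {n : ℕ} (σ : Equiv.Perm (Fin n)) : (Tset σ).card < n + 1 :=
  Nat.lt_succ_of_le ((Finset.card_le_univ _).trans (by simp))

/-- `insertPerm π a b` is `π^{(a,b)}`, the permutation of `Fin (n+1)` obtained from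
`π : Perm (Fin n)` by inserting the value `b` at position `a`. -/
def insertPerm {n : ℕ} (π : Equiv.Perm (Fin n)) (a b : Fin (n + 1)) :
    Equiv.Perm (Fin (n + 1)) :=
  ((finSuccEquiv' a).trans (Equiv.optionCongr π)).trans (finSuccEquiv' b).symm

lemma mem_iff_lt_card_of_isLowerSet {n : ℕ} {s : Finset (Fin n)}
    (hs : IsLowerSet (s : Set (Fin n))) {i : Fin n} : i ∈ s ↔ (i : ℕ) < #s := by
  constructor
  · intro hi
    have hsub : Iic i ⊆ s := fun _ hj => hs (mem_Iic.1 hj) hi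
    simpa only [Fin.card_Iic, Nat.succ_le_iff] using card_le_card hsub
  · contrapose!
    intro hi
    have hsub : s ⊆ Iio i := fun j hj => mem_Iio.2 <| lt_of_not_ge fun hij => hi (hs hij hj)
    simpa only [Fin.card_Iio] using card_le_card hsub

lemma contains_iff_exists_strictMono {n k : ℕ} {σ : Perm (Fin n)} {τ : Perm (Fin k)} :
    Contains σ τ ↔ ∃ f : Fin k → Fin n, StrictMono f ∧ StrictMono fun a => σ (f (τ⁻¹ a)) := by
  refine exists_congr fun f => and_congr_right fun _ => ⟨fun h a b hab => ?_, fun h a b => ?_⟩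
  · simpa [h] using hab
  · simpa using h.lt_iff_lt (a := τ a) (b := τ b)

lemma contains_p132_iff {n : ℕ} {σ : Perm (Fin n)} :
    Contains σ p132 ↔ ∃ a b c, a < b ∧ b < c ∧ σ a < σ c ∧ σ c < σ b := by
  constructor
  · rintro ⟨f, hf, hσf⟩
    exact ⟨f 0, f 1, f 2, hf (by decide), hf (by decide), (hσf 0 2).2 (by decide),
      (hσf 2 1).2 (by decide)⟩
  · rintro ⟨a, b, c, hab, hbc, hac, hcb⟩
    have hvalues : (fun x => σ (![a, b, c] (p132⁻¹ x))) = ![σ a, σ c, σ b] := by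
      funext x
      fin_cases x <;> rfl
    refine contains_iff_exists_strictMono.2 ⟨![a, b, c], ?_, ?_⟩
    · simp [hab, hbc]
    · rw [hvalues]
      simp [hac, hcb]

lemma avoids_p132_iff {n : ℕ} {σ : Perm (Fin n)} :
    Avoids σ p132 ↔ ∀ ⦃a b c⦄, a < b → b < c → σ a < σ c → σ b ≤ σ c := by
  simp only [Avoids, contains_p132_iff, not_exists, not_and, not_lt]

section Tset

variable {n : ℕ} {σ : Perm (Fin n)}

lemma mem_Tset {i : Fin n} : i ∈ Tset σ ↔ i < σ i ∧ i < σ⁻¹ i := by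
  simp only [Tset, mem_filter, mem_univ, true_and, Fin.lt_def]

lemma apply_notMem_Tset {i : Fin n} (hi : i ∈ Tset σ) : σ i ∉ Tset σ := fun hσi =>
  lt_asymm (mem_Tset.1 hi).1 <| by simpa using (mem_Tset.1 hσi).2

lemma two_mul_card_Tset_le (σ : Perm (Fin n)) : 2 * #(Tset σ) ≤ n := by
  have hdisj : Disjoint (Tset σ) ((Tset σ).map σ.toEmbedding) :=
    disjoint_right.2 <| forall_mem_map.2 fun _ hi => apply_notMem_Tset hi
  calc 2 * #(Tset σ) = #((Tset σ).disjUnion _ hdisj) := by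
        rw [card_disjUnion, card_map, two_mul]
    _ ≤ n := card_finset_fin_le _

lemma mem_Tset_iff_forall_le (h : Avoids σ p132) {i : Fin n} :
    i ∈ Tset σ ↔ ∀ p ≤ i, i < σ p := by
  rw [mem_Tset]
  constructor
  · rintro ⟨hσi, hinv⟩ p hpi
    by_contra! hσp
    have hp_lt : p < i := hpi.lt_of_ne fun hp => hσi.not_ge (hp ▸ hσp)
    have hσp_lt : σ p < i := hσp.lt_of_ne fun hp => hinv.not_ge (Perm.eq_inv_iff_eq.2 hp ▸ hpi)
    -- `p < i < σ⁻¹ i` carry the values `σ p < i < σ i` in the order 132.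
    have hσi_le : σ i ≤ i := by
      simpa using avoids_p132_iff.1 h hp_lt hinv (by simpa using hσp_lt)
    exact hσi_le.not_gt hσi
  · refine fun hbox => ⟨hbox i le_rfl, ?_⟩
    by_contra! hinv
    exact (hbox _ hinv).ne (Perm.inv_eq_iff_eq.1 rfl)

lemma isLowerSet_Tset (h : Avoids σ p132) : IsLowerSet (Tset σ : Set (Fin n)) := by
  intro j i hij hj
  rw [mem_coe, mem_Tset_iff_forall_le h] at hj ⊢
  exact fun p hpi => hij.trans_lt (hj p (hpi.trans hij))

end Tset

lemma Tset_eq_empty_iff {n : ℕ} {σ : Perm (Fin (n + 1))} (h : Avoids σ p132) :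
    Tset σ = ∅ ↔ σ 0 = 0 := by
  have zero_mem_iff : 0 ∈ Tset σ ↔ σ 0 ≠ 0 := by
    simp only [mem_Tset_iff_forall_le h, Fin.le_zero_iff, forall_eq, Fin.pos_iff_ne_zero]
  rw [← not_iff_not, ← ne_eq, ← nonempty_iff_ne_empty, ← ne_eq, ← zero_mem_iff]
  exact ⟨fun ⟨j, hj⟩ => isLowerSet_Tset h (Fin.zero_le j) hj, fun h0 => ⟨0, h0⟩⟩

section insertPerm

variable {n : ℕ} (σ : Perm (Fin n)) (a b : Fin (n + 1))

@[simp]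
lemma insertPerm_apply_self : insertPerm σ a b a = b := by
  simp [insertPerm]

@[simp]
lemma insertPerm_apply_succAbove (i : Fin n) :
    insertPerm σ a b (a.succAbove i) = b.succAbove (σ i) := by
  simp [insertPerm]

end insertPerm

lemma avoids_insertPerm_p132 {n : ℕ} {σ : Perm (Fin n)} (h : Avoids σ p132) {a b : Fin (n + 1)}
    (hempty : ∀ i : Fin n, i.castSucc < a → b ≤ (σ i).castSucc)
    {p : Fin n} (hpa : p.castSucc ≤ a) (hpb : (σ p).castSucc ≤ b) :
    Avoids (insertPerm σ a b) p132 := by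
  rw [avoids_p132_iff] at h ⊢
  intro x y z hxy hyz hxz
  rcases Fin.eq_self_or_eq_succAbove a x with rfl | ⟨i, rfl⟩
  · obtain ⟨q, rfl⟩ := Fin.exists_succAbove_eq hxy.ne'
    obtain ⟨r, rfl⟩ := Fin.exists_succAbove_eq (hxy.trans hyz).ne'
    simp only [insertPerm_apply_self, insertPerm_apply_succAbove, Fin.succAbove_lt_succAbove_iff,
      Fin.succAbove_le_succAbove_iff, Fin.lt_succAbove_iff_le_castSucc] at hxy hyz hxz ⊢
    have hpq : p ≤ q := Fin.castSucc_le_castSucc_iff.1 (hpa.trans hxy)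
    have hpr : σ p < σ r := (Fin.castSucc_le_castSucc_iff.1 (hpb.trans hxz)).lt_of_ne
      (σ.injective.ne (hpq.trans_lt hyz).ne)
    rcases hpq.eq_or_lt with rfl | hpq
    · exact hpr.le
    · exact h hpq hyz hpr
  · have hbelow : a.succAbove i < a → b < insertPerm σ a b (a.succAbove i) := by
      simpa only [insertPerm_apply_succAbove, Fin.succAbove_lt_iff_castSucc_lt,
        Fin.lt_succAbove_iff_le_castSucc] using hempty i
    rcases Fin.eq_self_or_eq_succAbove a y with rfl | ⟨q, rfl⟩
    · simpa only [insertPerm_apply_self] using ((hbelow hxy).trans hxz).le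
    rcases Fin.eq_self_or_eq_succAbove a z with rfl | ⟨r, rfl⟩
    · rw [insertPerm_apply_self] at hxz
      exact absurd hxz (hbelow (hxy.trans hyz)).not_gt
    simp only [insertPerm_apply_succAbove, Fin.succAbove_lt_succAbove_iff,
      Fin.succAbove_le_succAbove_iff] at hxy hyz hxz ⊢
    exact h hxy hyz hxz

lemma avoids_insertPerm_card_Tset {n : ℕ} {σ : Perm (Fin (n + 1))} (h : Avoids σ p132) :
    Avoids (insertPerm σ ⟨#(Tset σ), Tset_card_lt σ⟩ ⟨#(Tset σ), Tset_card_lt σ⟩) p132 := by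
  have mem_iff {i : Fin (n + 1)} : i ∈ Tset σ ↔ (i : ℕ) < #(Tset σ) :=
    mem_iff_lt_card_of_isLowerSet (isLowerSet_Tset h)
  have hlt : #(Tset σ) < n + 1 := by have := two_mul_card_Tset_le σ; lia
  let k : Fin (n + 1) := ⟨#(Tset σ), hlt⟩
  have hk : k ∉ Tset σ := mt mem_iff.1 (lt_irrefl _)
  obtain ⟨p, hpk, hσpk⟩ : ∃ p ≤ k, σ p ≤ k := by
    simpa only [mem_Tset_iff_forall_le h, not_forall, not_lt, exists_prop] using hk
  refine avoids_insertPerm_p132 h (fun i hi => ?_) (Fin.castSucc_le_castSucc_iff.2 hpk)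
    (Fin.castSucc_le_castSucc_iff.2 hσpk)
  have hi_mem : i ∈ Tset σ := mem_iff.2 hi
  exact le_of_not_gt fun hσi => apply_notMem_Tset hi_mem (mem_iff.2 hσi)

/-- For a 132-avoiding `σ` of `[n+1]` (0-indexed here):
(a) `T(σ) = ∅` iff `σ` fixes the first position;
(b) `T(σ)` is downward closed;
(c) `2|T(σ)| ≤ n+1`;
(e) inserting the value `|T(σ)|+1` at position `|T(σ)|+1` (1-indexed; here both are
the 0-indexed `|T(σ)|`) yields a 132-avoiding permutation of `[n+2]`. -/
theorem Tset_properties {n : ℕ} (σ : Equiv.Perm (Fin (n + 1))) (h : Avoids σ p132) :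
    (Tset σ = ∅ ↔ σ 0 = 0) ∧
    (∀ j ∈ Tset σ, ∀ i : Fin (n + 1), i ≤ j → i ∈ Tset σ) ∧
    (2 * (Tset σ).card ≤ n + 1) ∧
    Avoids (insertPerm σ ⟨(Tset σ).card, Tset_card_lt σ⟩
      ⟨(Tset σ).card, Tset_card_lt σ⟩) p132 := by
  exact ⟨Tset_eq_empty_iff h, fun _ hj _ hij => isLowerSet_Tset h hij hj,
    two_mul_card_Tset_le σ, avoids_insertPerm_card_Tset h⟩
end
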